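/- Let G = (V,E) be a finite connected simple graph and let x, y be adjacent vertices with d_x ≥ d_y. Set N_x := S_1(x) \ (S_1(y) ∪ {y}), N_y := S_1(y) \ (S_1(x) ∪ {x}), and let α := |S_1(x) ∩ S_1(y)|. Let M_1 be a matching of maximum size among the edges of G joining a vertex of N_x to a vertex of N_y, and let M_2 be a maximum-size collection of pairwise disjoint pairs (u,v) with u ∈ N_x, v ∈ N_y and graph distance d(u,v) ≤ 2 (each vertex used at most once). If κ_LLY(x,y) > 0, then |M_1| + |M_2| ≥ 2·d_y − 3α − 3. -/

import Mathlib

/-!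
The proof is by duality. If `f` is a 1-Lipschitz function with `f x - f y = 1`, testing the
Wasserstein distance against `f` bounds the curvature from above:
`κ(x, y) ≤ 1 - (average of f over S₁(x) - average of f over S₁(y))` (`kappaLLY_le`). The limit
defining `κ` exists because the quotient is monotone in the idleness `p`: mixing a plan at `p` with
the unit mass moved from `x` to `y` gives a plan at any larger `q`.

To choose `f`, König's theorem (`exists_matching_cover`, deduced from Hall's theorem) gives
vertex covers `S₁ ∪ T₁` and `S₂ ∪ T₂`, with `Sᵢ ⊆ N_x` and `Tᵢ ⊆ N_y`, of the two bipartite graphs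
"adjacent" and "at distance at most 2", of total size at most `|M₁| + |M₂|`. Put `φ = 2 - 1_{S₁} -
1_{S₂}` on `N_x`, `ψ = -1 + 1_{T₁} + 1_{T₂}` on `N_y`, `φ x = 1` and `ψ y = 0`. The covering
property gives `φ u - ψ v ≤ d(u, v)`, so there is a 1-Lipschitz `f` with `φ ≤ f` on
`N_x ∪ {x}` and `f ≤ ψ` on `N_y ∪ {y}`. The sum of `f` over the common neighbours enters both
averages with opposite signs; it is at most `α`, so after replacing `d_x` by the smaller `d_y` it
cancels. Positivity of `κ` then gives `4 + 3α + |M₁| + |M₂| > 2 d_y`.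
-/

open Filter Finset

attribute [local instance] Classical.propDecidable

variable {V : Type*}

/-- The measure `μ_x^p`. -/
noncomputable def muP [Fintype V] (G : SimpleGraph V) (p : ℝ) (x : V) : V → ℝ :=
  fun z => if z = x then p else if G.Adj x z then (1 - p) / (G.degree x) else 0

/-- A transport plan between two measures. -/
def IsTransportPlan [Fintype V] (μ₁ μ₂ : V → ℝ) (π : V → V → ℝ) : Prop :=
  (∀ u v, 0 ≤ π u v ∧ π u v ≤ 1) ∧
  (∀ u, ∑ v, π u v = μ₁ u) ∧ (∀ v, ∑ u, π u v = μ₂ v)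

/-- The cost of a transport plan. -/
noncomputable def planCost [Fintype V] (G : SimpleGraph V) (π : V → V → ℝ) : ℝ :=
  ∑ u, ∑ v, (G.dist u v : ℝ) * π u v

/-- The Wasserstein distance between two measures on a graph. -/
noncomputable def Wdist [Fintype V] (G : SimpleGraph V) (μ₁ μ₂ : V → ℝ) : ℝ :=
  sInf {c : ℝ | ∃ π, IsTransportPlan μ₁ μ₂ π ∧ c = planCost G π}

/-- The Lin-Lu-Yau curvature of a pair of vertices. -/
noncomputable def kappaLLY [Fintype V] (G : SimpleGraph V) (x y : V) : ℝ :=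
  limUnder (nhdsWithin 1 (Set.Iio (1 : ℝ)))
    (fun p => (1 - Wdist G (muP G p x) (muP G p y) / (G.dist x y)) / (1 - p))

/-- `κ_LLY^{(i)}(G)`: infimum of the curvature over pairs at distance `i`. -/
noncomputable def kappaLLYscale [Fintype V] (G : SimpleGraph V) (i : ℕ) : ℝ :=
  sInf {k : ℝ | ∃ x y : V, G.dist x y = i ∧ k = kappaLLY G x y}

/-- `κ_LLY(G)`: infimum of the curvature over adjacent pairs. -/
noncomputable def kappaLLYedge [Fintype V] (G : SimpleGraph V) : ℝ :=
  sInf {k : ℝ | ∃ x y : V, G.Adj x y ∧ k = kappaLLY G x y}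

/-- The vertex connectivity `k(G)`. -/
noncomputable def vertexConnectivity [Fintype V] (G : SimpleGraph V) : ℕ :=
  sInf {n : ℕ | ∃ S : Finset V, S.card = n ∧
    (¬ (G.induce ((S : Set V)ᶜ)).Connected ∨ ((S : Set V)ᶜ).Subsingleton)}

/-- The edge connectivity `k'(G)`. -/
noncomputable def edgeConnectivity [Fintype V] (G : SimpleGraph V) : ℕ :=
  sInf {n : ℕ | ∃ F : Finset (Sym2 V), F.card = n ∧ (F : Set (Sym2 V)) ⊆ G.edgeSet ∧
    ¬ (G.deleteEdges (F : Set (Sym2 V))).Connected}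

/-- Amply regular graph with parameters `(d, α, β)`. -/
def IsAmplyRegular [Fintype V] (G : SimpleGraph V) (d α β : ℕ) : Prop :=
  G.IsRegularOfDegree d ∧
  (∀ u v, G.Adj u v → (G.neighborFinset u ∩ G.neighborFinset v).card = α) ∧
  (∀ u v : V, G.dist u v = 2 → (G.neighborFinset u ∩ G.neighborFinset v).card = β)

/-- A matching given as a finite set of ordered pairs satisfying a constraint `P`. -/
def IsPairMatching (P : V → V → Prop) (M : Finset (V × V)) : Prop :=
  (∀ e ∈ M, P e.1 e.2) ∧
  ∀ e ∈ M, ∀ f ∈ M, e ≠ f → e.1 ≠ f.1 ∧ e.1 ≠ f.2 ∧ e.2 ≠ f.1 ∧ e.2 ≠ f.2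

/-! ### Transport plans and the curvature bound -/

lemma muP_eq [Fintype V] (G : SimpleGraph V) (p : ℝ) (x z : V) :
    muP G p x z = p * (if z = x then 1 else 0) +
      (1 - p) * (if G.Adj x z then 1 / (G.degree x : ℝ) else 0) := by
  unfold muP
  by_cases h : z = x
  · subst h; simp
  · by_cases h' : G.Adj x z <;> simp [h, h', div_eq_mul_inv]

lemma sum_mul_muP [Fintype V] (G : SimpleGraph V) (p : ℝ) (x : V) (f : V → ℝ) :
    ∑ z, f z * muP G p x z =
      p * f x + (1 - p) * ((∑ z ∈ G.neighborFinset x, f z) / G.degree x) := by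
  have h1 : ∀ z, f z * muP G p x z = p * (if z = x then f z else 0) +
      (1 - p) * (if G.Adj x z then f z / (G.degree x : ℝ) else 0) := by
    intro z
    rw [muP_eq]
    split_ifs <;> ring
  have h2 : G.neighborFinset x = univ.filter (fun z => G.Adj x z) := by
    ext z; simp
  simp only [h1, sum_add_distrib, ← mul_sum]
  rw [h2, sum_div, sum_filter]
  simp

lemma sum_muP [Fintype V] (G : SimpleGraph V) (p : ℝ) (x : V) (hx : 0 < G.degree x) :
    ∑ z, muP G p x z = 1 := by
  have h := sum_mul_muP G p x (fun _ => 1)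
  have hx' : (G.degree x : ℝ) ≠ 0 := by positivity
  simp only [one_mul, sum_const, SimpleGraph.card_neighborFinset_eq_degree, nsmul_eq_mul,
    mul_one, div_self hx'] at h
  rw [h]; ring

lemma muP_nonneg [Fintype V] (G : SimpleGraph V) {p : ℝ} (h0 : 0 ≤ p) (h1 : p ≤ 1) (x z : V) :
    0 ≤ muP G p x z := by
  have : 0 ≤ 1 - p := by linarith
  unfold muP
  split_ifs <;> positivity

lemma muP_le_one [Fintype V] (G : SimpleGraph V) {p : ℝ} (h0 : 0 ≤ p) (h1 : p ≤ 1) (x z : V)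
    (hx : 0 < G.degree x) : muP G p x z ≤ 1 := by
  rw [← sum_muP G p x hx]
  exact single_le_sum (fun i _ => muP_nonneg G h0 h1 x i) (mem_univ z)

/-- The product measure is a transport plan. -/
lemma exists_plan [Fintype V] (G : SimpleGraph V) {p : ℝ} (h0 : 0 ≤ p) (h1 : p ≤ 1) (x y : V)
    (hx : 0 < G.degree x) (hy : 0 < G.degree y) :
    ∃ π, IsTransportPlan (muP G p x) (muP G p y) π := by
  refine ⟨fun u v => muP G p x u * muP G p y v, fun u v => ⟨?_, ?_⟩, fun u => ?_, fun v => ?_⟩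
  · exact mul_nonneg (muP_nonneg G h0 h1 x u) (muP_nonneg G h0 h1 y v)
  · exact mul_le_one₀ (muP_le_one G h0 h1 x u hx) (muP_nonneg G h0 h1 y v)
      (muP_le_one G h0 h1 y v hy)
  · rw [← mul_sum, sum_muP G p y hy, mul_one]
  · rw [← sum_mul, sum_muP G p x hx, one_mul]

lemma planCost_nonneg [Fintype V] (G : SimpleGraph V) {μ₁ μ₂ : V → ℝ} {π : V → V → ℝ}
    (h : IsTransportPlan μ₁ μ₂ π) : 0 ≤ planCost G π :=
  sum_nonneg fun u _ => sum_nonneg fun v _ => mul_nonneg (Nat.cast_nonneg _) (h.1 u v).1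

lemma Wdist_le [Fintype V] (G : SimpleGraph V) {μ₁ μ₂ : V → ℝ} {π : V → V → ℝ}
    (h : IsTransportPlan μ₁ μ₂ π) : Wdist G μ₁ μ₂ ≤ planCost G π :=
  csInf_le ⟨0, by rintro c ⟨π', h', rfl⟩; exact planCost_nonneg G h'⟩ ⟨π, h, rfl⟩

/-- The easy half of Kantorovich duality. -/
lemma le_planCost [Fintype V] (G : SimpleGraph V) {μ₁ μ₂ : V → ℝ} {π : V → V → ℝ}
    (h : IsTransportPlan μ₁ μ₂ π) (f : V → ℝ) (hf : ∀ u v, f u - f v ≤ G.dist u v) :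
    ∑ z, f z * μ₁ z - ∑ z, f z * μ₂ z ≤ planCost G π := by
  have e1 : ∑ z, f z * μ₁ z = ∑ u, ∑ v, f u * π u v := by
    refine sum_congr rfl fun u _ => ?_
    rw [← mul_sum, h.2.1]
  have e2 : ∑ z, f z * μ₂ z = ∑ u, ∑ v, f v * π u v := by
    rw [sum_comm]
    refine sum_congr rfl fun v _ => ?_
    rw [← mul_sum, h.2.2]
  rw [e1, e2, ← sum_sub_distrib]
  refine sum_le_sum fun u _ => ?_
  rw [← sum_sub_distrib]
  refine sum_le_sum fun v _ => ?_
  rw [← sub_mul]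
  exact mul_le_mul_of_nonneg_right (hf u v) (h.1 u v).1

/-- Mixing an arbitrary plan at idleness `p` with the unit mass moved along the edge `xy`. -/
lemma Wdist_muP_le [Fintype V] (G : SimpleGraph V) {x y : V} (hxy : G.Adj x y) {p q : ℝ}
    (h0 : 0 ≤ p) (hpq : p ≤ q) (hq : q < 1) :
    (1 - p) * Wdist G (muP G q x) (muP G q y) ≤
      (1 - q) * Wdist G (muP G p x) (muP G p y) + (q - p) := by
  have hx : 0 < G.degree x := (G.degree_pos_iff_exists_adj x).2 ⟨y, hxy⟩
  have hy : 0 < G.degree y := (G.degree_pos_iff_exists_adj y).2 ⟨x, hxy.symm⟩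
  have hp1 : 0 < 1 - p := by linarith
  have hq1 : 0 < 1 - q := by linarith
  set t := (1 - q) / (1 - p) with ht
  have ht0 : 0 < t := by positivity
  have ht1 : t ≤ 1 := by rw [ht, div_le_one hp1]; linarith
  have htp : t * (1 - p) = 1 - q := by rw [ht]; field_simp
  have key : (Wdist G (muP G q x) (muP G q y) - (1 - t)) / t ≤
      Wdist G (muP G p x) (muP G p y) := by
    obtain ⟨π₀, hπ₀⟩ := exists_plan G h0 (by linarith : p ≤ 1) x y hx hy
    refine le_csInf ⟨_, π₀, hπ₀, rfl⟩ ?_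
    rintro c ⟨π, hπ, rfl⟩
    rw [div_le_iff₀ ht0, sub_le_iff_le_add]
    have hmix : ∀ w z : V, muP G q w z = t * muP G p w z + (1 - t) * (if z = w then 1 else 0) := by
      intro w z
      rw [muP_eq, muP_eq]
      linear_combination (- (if G.Adj w z then 1 / (G.degree w : ℝ) else 0)
        + (if z = w then 1 else 0)) * htp
    have hplan : IsTransportPlan (muP G q x) (muP G q y)
        (fun u v => t * π u v + (1 - t) * ((if u = x then 1 else 0) * (if v = y then 1 else 0))) := by
      refine ⟨fun u v => ?_, fun u => ?_, fun v => ?_⟩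
      · have h2 := hπ.1 u v
        have h3 : 0 ≤ 1 - t := by linarith
        have h4 : t * π u v ≤ t := mul_le_of_le_one_right ht0.le h2.2
        have h5 : 0 ≤ t * π u v := mul_nonneg ht0.le h2.1
        dsimp only
        split_ifs <;> constructor <;> linarith
      · rw [sum_add_distrib, ← mul_sum, hπ.2.1, ← mul_sum, ← mul_sum, hmix]
        simp
      · rw [sum_add_distrib, ← mul_sum, hπ.2.2, ← mul_sum, ← sum_mul, hmix]
        simp
    refine (Wdist_le G hplan).trans (le_of_eq ?_)
    have hd1 : (G.dist x y : ℝ) = 1 := by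
      rw [SimpleGraph.dist_eq_one_iff_adj.2 hxy]; simp
    have e : ∑ u, ∑ v, (G.dist u v : ℝ) *
        ((if u = x then 1 else 0) * (if v = y then 1 else 0)) = 1 := by
      rw [sum_eq_single x, sum_eq_single y]
      · simp [hd1]
      · intro v _ hv; simp [hv]
      · simp
      · intro u _ hu; simp [hu]
      · simp
    unfold planCost
    trans t * (∑ u, ∑ v, (G.dist u v : ℝ) * π u v) + (1 - t) * ∑ u, ∑ v, (G.dist u v : ℝ) *
        ((if u = x then 1 else 0) * (if v = y then 1 else 0))
    swap
    · rw [e]; ring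
    rw [mul_sum, mul_sum, ← sum_add_distrib]
    refine sum_congr rfl fun u _ => ?_
    rw [mul_sum, mul_sum, ← sum_add_distrib]
    refine sum_congr rfl fun v _ => ?_
    ring
  rw [div_le_iff₀ ht0] at key
  have h6 := mul_le_mul_of_nonneg_left key hp1.le
  linear_combination h6 + (1 - Wdist G (muP G p x) (muP G p y)) * (-htp)

/-- A 1-Lipschitz function of slope one along the edge `xy` bounds the curvature from above. -/
lemma kappaLLY_le [Fintype V] (G : SimpleGraph V) {x y : V} (hxy : G.Adj x y)
    (f : V → ℝ) (hf : ∀ u v, f u - f v ≤ G.dist u v) (hfxy : f x - f y = 1) :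
    kappaLLY G x y ≤ 1 - ((∑ z ∈ G.neighborFinset x, f z) / G.degree x -
      (∑ z ∈ G.neighborFinset y, f z) / G.degree y) := by
  have hx : 0 < G.degree x := (G.degree_pos_iff_exists_adj x).2 ⟨y, hxy⟩
  have hy : 0 < G.degree y := (G.degree_pos_iff_exists_adj y).2 ⟨x, hxy.symm⟩
  have hd1 : (G.dist x y : ℝ) = 1 := by
    rw [SimpleGraph.dist_eq_one_iff_adj.2 hxy]; simp
  set g : ℝ → ℝ := fun p => (1 - Wdist G (muP G p x) (muP G p y) / (G.dist x y)) / (1 - p) with hg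
  set c := 1 - ((∑ z ∈ G.neighborFinset x, f z) / G.degree x -
      (∑ z ∈ G.neighborFinset y, f z) / G.degree y) with hc
  have hub : ∀ p ∈ Set.Ioo (0 : ℝ) 1, g p ≤ c := by
    intro p hp
    have hp1 : 0 < 1 - p := by linarith [hp.2]
    have hW : p + (1 - p) * (1 - c) ≤ Wdist G (muP G p x) (muP G p y) := by
      obtain ⟨π₀, hπ₀⟩ := exists_plan G hp.1.le hp.2.le x y hx hy
      refine le_csInf ⟨_, π₀, hπ₀, rfl⟩ ?_
      rintro _ ⟨π, hπ, rfl⟩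
      have := le_planCost G hπ f hf
      rw [sum_mul_muP, sum_mul_muP] at this
      refine le_trans (le_of_eq ?_) this
      rw [hc]
      linear_combination (-p) * hfxy
    rw [hg]
    simp only [hd1, div_one]
    rw [div_le_iff₀ hp1]
    linarith
  have hmono : MonotoneOn g (Set.Ioo (0 : ℝ) 1) := by
    intro p hp q hq hpq
    have hp1 : 0 < 1 - p := by linarith [hp.2]
    have hq1 : 0 < 1 - q := by linarith [hq.2]
    have := Wdist_muP_le G hxy hp.1.le hpq hq.2
    simp only [hg, hd1, div_one]
    rw [div_le_div_iff₀ hp1 hq1]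
    linarith
  have hne : (Set.Ioo (0 : ℝ) 1).Nonempty := ⟨1 / 2, by norm_num⟩
  have hlim := MonotoneOn.tendsto_nhdsWithin_Ioo_left hne hmono
    ⟨c, by rintro _ ⟨p, hp, rfl⟩; exact hub p hp⟩
  have hk : kappaLLY G x y = sSup (g '' Set.Ioo (0 : ℝ) 1) := hlim.limUnder_eq
  rw [hk]
  refine csSup_le (hne.image g) ?_
  rintro _ ⟨p, hp, rfl⟩
  exact hub p hp

/-! ### Matchings, covers and potentials -/

/-- **König's theorem** for the bipartite graph with parts `A` and `B` and edge relation `R`, in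
the form used here: some matching is at least as large as some vertex cover `S ∪ T`. -/
lemma exists_matching_cover (A B : Finset V) (hAB : Disjoint A B) (R : V → V → Prop) :
    ∃ M : Finset (V × V), ∃ S ⊆ A, ∃ T ⊆ B,
      IsPairMatching (fun u v => u ∈ A ∧ v ∈ B ∧ R u v) M ∧ S.card + T.card ≤ M.card ∧
      ∀ u ∈ A, ∀ v ∈ B, R u v → u ∈ S ∨ v ∈ T := by
  let N : Finset V → Finset V := fun S => B.filter (fun v => ∃ u ∈ S, R u v)
  -- `S₀` maximises the deficiency `|S| - |N(S)|`; the cover is `(A \ S₀) ∪ N(S₀)`.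
  obtain ⟨S₀, hS₀, hmax⟩ := exists_max_image A.powerset
    (fun S => (S.card : ℤ) - (N S).card) ⟨∅, by simp⟩
  rw [mem_powerset] at hS₀
  obtain ⟨δ, hδ⟩ : ∃ δ : ℕ, (S₀.card : ℤ) - (N S₀).card = δ := by
    have := hmax ∅ (by simp)
    simp only [N, card_empty, notMem_empty, false_and, exists_false, filter_false] at this
    exact ⟨_, (Int.toNat_of_nonneg (by simpa using this)).symm⟩
  -- Hall's theorem after adding `δ` new vertices to `B`, each joined to all of `A`.
  let nb : A → Finset (V ⊕ Fin δ) := fun a => (N {a.1}).disjSum univ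
  have hall : ∀ s : Finset A, s.card ≤ (s.biUnion nb).card := by
    intro s
    rcases s.eq_empty_or_nonempty with rfl | hs
    · simp
    have h1 : (N (s.map (Function.Embedding.subtype _))).disjSum (univ : Finset (Fin δ))
        ⊆ s.biUnion nb := by
      intro w hw
      rcases w with v | i
      · simp only [inl_mem_disjSum, N, mem_filter, Finset.mem_map] at hw
        obtain ⟨hv, u, ⟨a, ha, rfl⟩, hR⟩ := hw
        rw [mem_biUnion]
        exact ⟨a, ha, by simpa [nb, N, hv] using hR⟩
      · obtain ⟨a, ha⟩ := hs
        rw [mem_biUnion]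
        exact ⟨a, ha, by simp [nb]⟩
    have h2 := card_le_card h1
    rw [card_disjSum, card_univ, Fintype.card_fin] at h2
    have h3 := hmax (s.map (Function.Embedding.subtype _)) (by
      rw [mem_powerset]
      intro u hu
      rw [Finset.mem_map] at hu
      obtain ⟨a, _, rfl⟩ := hu
      exact a.2)
    rw [card_map, hδ] at h3
    omega
  obtain ⟨F, hFinj, hF⟩ := (Finset.all_card_le_biUnion_card_iff_exists_injective nb).1 hall
  have hFl : ∀ a v, F a = Sum.inl v → v ∈ B ∧ R a.1 v := by
    intro a v h
    have := hF a
    rw [h] at this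
    simpa [nb, N] using this
  let M : Finset (V × V) := (A ×ˢ B).filter (fun e => ∃ a : A, a.1 = e.1 ∧ F a = Sum.inl e.2)
  refine ⟨M, A \ S₀, sdiff_subset, N S₀, filter_subset _ _, ⟨?_, ?_⟩, ?_, ?_⟩
  · intro e he
    simp only [M, mem_filter, mem_product] at he
    obtain ⟨⟨h1, h2⟩, a, ha, haF⟩ := he
    exact ⟨h1, h2, ha ▸ (hFl a _ haF).2⟩
  · intro e he e' he' hne
    simp only [M, mem_filter, mem_product] at he he'
    obtain ⟨⟨h1, h2⟩, a, ha, haF⟩ := he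
    obtain ⟨⟨h1', h2'⟩, a', ha', haF'⟩ := he'
    refine ⟨fun h => ?_, fun h => ?_, fun h => ?_, fun h => ?_⟩
    · have haa : a = a' := Subtype.ext (by rw [ha, ha', h])
      subst haa
      rw [haF] at haF'
      exact hne (Prod.ext h (Sum.inl.inj haF'))
    · exact disjoint_left.1 hAB h1 (h ▸ h2')
    · exact disjoint_left.1 hAB h1' (h ▸ h2)
    · have haa : a = a' := hFinj (by rw [haF, haF', h])
      subst haa
      exact hne (Prod.ext (ha ▸ ha') h)
  · have h4 : (univ : Finset A).image F ⊆ (M.image Prod.snd).disjSum univ := by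
      intro w hw
      rw [mem_image] at hw
      obtain ⟨a, _, rfl⟩ := hw
      rcases hFa : F a with v | i
      · rw [inl_mem_disjSum, mem_image]
        refine ⟨(a.1, v), ?_, rfl⟩
        simp only [M, mem_filter, mem_product]
        exact ⟨⟨a.2, (hFl a v hFa).1⟩, a, rfl, hFa⟩
      · simp
    have h5 := card_le_card h4
    rw [card_image_of_injective _ hFinj, card_disjSum, card_univ, card_univ, Fintype.card_fin,
      Fintype.card_coe] at h5
    have h6 : (M.image Prod.snd).card ≤ M.card := card_image_le
    have h7 := card_sdiff_add_card_eq_card hS₀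
    omega
  · intro u hu v hv hR
    by_cases h : u ∈ S₀
    · right
      simp only [N, mem_filter]
      exact ⟨hv, u, h, hR⟩
    · left
      exact Finset.mem_sdiff.2 ⟨hu, h⟩

/-- McShane extension: potentials with `φ u - ψ v ≤ d(u, v)` are separated by a 1-Lipschitz
function. -/
lemma exists_lipschitz (G : SimpleGraph V) (hconn : G.Connected) (A B : Finset V)
    (hB : B.Nonempty) (φ ψ : V → ℝ) (h : ∀ u ∈ A, ∀ v ∈ B, φ u - ψ v ≤ G.dist u v) :
    ∃ f : V → ℝ, (∀ u v, f u - f v ≤ G.dist u v) ∧ (∀ u ∈ A, φ u ≤ f u) ∧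
      ∀ v ∈ B, f v ≤ ψ v := by
  refine ⟨fun w => B.inf' hB (fun v => ψ v + G.dist w v), fun u w => ?_, fun u hu => ?_,
    fun v hv => ?_⟩
  · obtain ⟨v, hv, hv'⟩ := exists_mem_eq_inf' hB (fun v => ψ v + (G.dist w v : ℝ))
    have h1 : B.inf' hB (fun v => ψ v + (G.dist u v : ℝ)) ≤ ψ v + G.dist u v := inf'_le _ hv
    have h2 : (G.dist u v : ℝ) ≤ G.dist u w + G.dist w v := by
      exact_mod_cast hconn.dist_triangle
    simp only [hv']
    linarith
  · refine le_inf' _ _ fun v hv => ?_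
    linarith [h u hu v hv]
  · refine (inf'_le _ hv).trans ?_
    simp

/-- The arithmetic of the final estimate: `X`, `Y`, `s` are the sums of the potential over `N_x`,
`N_y` and the common neighbours, `a` and `b` the parts of the two covers in `N_x` and `N_y`. -/
lemma arith_bound {D d nx ny α a₁ a₂ b₁ b₂ X Y s : ℝ} (hdpos : 0 < d) (hdD : d ≤ D)
    (hD : D = 1 + nx + α) (hd : d = 1 + ny + α) (ha : 0 ≤ α + a₁ + a₂)
    (hs : s ≤ α) (hX : 2 * nx - a₁ - a₂ ≤ X) (hY : Y ≤ -ny + b₁ + b₂)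
    (hk : 0 < 1 - ((0 + X + s) / D - (1 + Y + s) / d)) :
    2 * d < 4 + 3 * α + (a₁ + b₁) + (a₂ + b₂) := by
  have hDpos : 0 < D := by linarith
  have q1 : 2 - (2 + 2 * α + a₁ + a₂ - s) / d ≤ (0 + X + s) / D := by
    have h1 := div_le_div_of_nonneg_left (by linarith : 0 ≤ 2 + 2 * α + a₁ + a₂ - s) hdpos hdD
    have h2 : 2 - (2 + 2 * α + a₁ + a₂ - s) / D ≤ (0 + X + s) / D := by
      rw [sub_le_iff_le_add, ← add_div, le_div_iff₀ hDpos]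
      linarith
    linarith
  have q2 : (1 + Y + s) / d ≤ (2 + α + b₁ + b₂ + s) / d - 1 := by
    rw [le_sub_iff_add_le, div_add_one hdpos.ne', div_le_div_iff_of_pos_right hdpos]
    linarith
  have q3 : 2 < (2 + 2 * α + a₁ + a₂ - s) / d + (2 + α + b₁ + b₂ + s) / d := by linarith
  rw [← add_div, lt_div_iff₀ hdpos] at q3
  linarith

/-- For adjacent vertices `x, y` with `d_x ≥ d_y`, `α` common neighbors, and
positive curvature `κ_LLY(x,y) > 0`: if `M₁` is a maximum matching between
`N_x = S₁(x) \ (S₁(y) ∪ {y})` and `N_y = S₁(y) \ (S₁(x) ∪ {x})`, and `M₂` is a maximum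
collection of pairwise disjoint pairs `(u,v)`, `u ∈ N_x`, `v ∈ N_y`, `d(u,v) ≤ 2`, then
`|M₁| + |M₂| ≥ 2 d_y − 3α − 3`. -/
theorem matching_bound_of_pos_curvature
    {V : Type*} [Fintype V] (G : SimpleGraph V) (hconn : G.Connected)
    (x y : V) (hxy : G.Adj x y) (hd : G.degree y ≤ G.degree x)
    (hpos : 0 < kappaLLY G x y)
    (Nx Ny : Finset V)
    (hNx : Nx = G.neighborFinset x \ insert y (G.neighborFinset y))
    (hNy : Ny = G.neighborFinset y \ insert x (G.neighborFinset x))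
    (M₁ M₂ : Finset (V × V))
    (hM₁ : IsPairMatching (fun u v => u ∈ Nx ∧ v ∈ Ny ∧ G.Adj u v) M₁)
    (hM₁max : ∀ M' : Finset (V × V),
      IsPairMatching (fun u v => u ∈ Nx ∧ v ∈ Ny ∧ G.Adj u v) M' → M'.card ≤ M₁.card)
    (hM₂ : IsPairMatching (fun u v => u ∈ Nx ∧ v ∈ Ny ∧ G.dist u v ≤ 2) M₂)
    (hM₂max : ∀ M' : Finset (V × V),
      IsPairMatching (fun u v => u ∈ Nx ∧ v ∈ Ny ∧ G.dist u v ≤ 2) M' → M'.card ≤ M₂.card) :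
    2 * (G.degree y : ℤ) - 3 * ((G.neighborFinset x ∩ G.neighborFinset y).card : ℤ) - 3 ≤
      (M₁.card : ℤ) + (M₂.card : ℤ) := by
  have hdisj : Disjoint Nx Ny := by
    rw [disjoint_left]
    intro u hu hv
    rw [hNx, Finset.mem_sdiff] at hu
    rw [hNy, Finset.mem_sdiff] at hv
    exact hu.2 (mem_insert_of_mem hv.1)
  have memNx : ∀ u ∈ Nx, G.Adj x u ∧ u ≠ y ∧ ¬ G.Adj y u := by
    intro u hu
    simpa [hNx] using hu
  have memNy : ∀ v ∈ Ny, G.Adj y v ∧ v ≠ x ∧ ¬ G.Adj x v := by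
    intro u hu
    simpa [hNy] using hu
  obtain ⟨M', S₁, hS₁, T₁, hT₁, hM', hc₁, hcov₁⟩ := exists_matching_cover Nx Ny hdisj G.Adj
  obtain ⟨M'', S₂, hS₂, T₂, hT₂, hM'', hc₂, hcov₂⟩ :=
    exists_matching_cover Nx Ny hdisj (fun u v => G.dist u v ≤ 2)
  have hm₁ := hM₁max M' hM'
  have hm₂ := hM₂max M'' hM''
  let ind : Finset V → V → ℝ := fun S u => if u ∈ S then 1 else 0
  have ind_nonneg : ∀ S u, 0 ≤ ind S u := fun S u => by
    simp only [ind]; split_ifs <;> norm_num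
  have ind_one : ∀ S u, u ∈ S → ind S u = 1 := fun S u h => by simp [ind, h]
  let φ : V → ℝ := fun u => if u = x then 1 else 2 - ind S₁ u - ind S₂ u
  let ψ : V → ℝ := fun v => if v = y then 0 else -1 + ind T₁ v + ind T₂ v
  have hφ : ∀ u ∈ Nx, φ u = 2 - ind S₁ u - ind S₂ u := fun u hu =>
    if_neg (memNx u hu).1.ne'
  have hψ : ∀ v ∈ Ny, ψ v = -1 + ind T₁ v + ind T₂ v := fun v hv =>
    if_neg (memNy v hv).1.ne'
  have hφx : φ x = 1 := if_pos rfl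
  have hψy : ψ y = 0 := if_pos rfl
  have hdxy : G.dist x y = 1 := SimpleGraph.dist_eq_one_iff_adj.2 hxy
  -- Vertices that are distinct and non-adjacent are at distance at least two.
  have hdist2 : ∀ u v, u ≠ v → ¬ G.Adj u v → (2 : ℝ) ≤ G.dist u v := by
    intro u v hne hna
    have h0 : 0 < G.dist u v := hconn.pos_dist_of_ne hne
    have h1 : G.dist u v ≠ 1 := fun h => hna (SimpleGraph.dist_eq_one_iff_adj.1 h)
    have : 2 ≤ G.dist u v := by omega
    exact_mod_cast this
  have hpot : ∀ u ∈ insert x Nx, ∀ v ∈ insert y Ny, φ u - ψ v ≤ G.dist u v := by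
    intro u hu v hv
    rcases mem_insert.1 hu with rfl | hu
    · rcases mem_insert.1 hv with rfl | hv
      · rw [hφx, hψy, hdxy]; norm_num
      · have h1 := hdist2 u v (memNy v hv).2.1.symm (memNy v hv).2.2
        rw [hφx, hψ v hv]
        linarith [ind_nonneg T₁ v, ind_nonneg T₂ v]
    · rcases mem_insert.1 hv with rfl | hv
      · have h1 := hdist2 u v (memNx u hu).2.1 (fun h => (memNx u hu).2.2 h.symm)
        rw [hφ u hu, hψy]
        linarith [ind_nonneg S₁ u, ind_nonneg S₂ u]
      · have hne : u ≠ v := fun h => disjoint_left.1 hdisj hu (h ▸ hv)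
        rw [hφ u hu, hψ v hv]
        have a1 := ind_nonneg S₁ u
        have a2 := ind_nonneg S₂ u
        have a3 := ind_nonneg T₁ v
        have a4 := ind_nonneg T₂ v
        have b2 : G.dist u v ≤ 2 → 1 ≤ ind S₂ u + ind T₂ v := fun h => by
          rcases hcov₂ u hu v hv h with h | h
          · linarith [ind_one _ _ h]
          · linarith [ind_one _ _ h]
        by_cases hadj : G.Adj u v
        · have h1 : G.dist u v = 1 := SimpleGraph.dist_eq_one_iff_adj.2 hadj
          have b1 : 1 ≤ ind S₁ u + ind T₁ v := by
            rcases hcov₁ u hu v hv hadj with h | h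
            · linarith [ind_one _ _ h]
            · linarith [ind_one _ _ h]
          have := b2 (by omega)
          rw [h1, Nat.cast_one]
          linarith
        · by_cases hle : G.dist u v ≤ 2
          · linarith [b2 hle, hdist2 u v hne hadj]
          · have : (3 : ℝ) ≤ G.dist u v := by
              have : 3 ≤ G.dist u v := by omega
              exact_mod_cast this
            linarith
  obtain ⟨f, hf, hfA, hfB⟩ := exists_lipschitz G hconn (insert x Nx) (insert y Ny)
    (insert_nonempty _ _) φ ψ hpot
  have hadj1 : ∀ u v, G.Adj u v → f u - f v ≤ 1 := by
    intro u v h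
    have := hf u v
    rwa [SimpleGraph.dist_eq_one_iff_adj.2 h, Nat.cast_one] at this
  -- The constraints at the two ends pin down `f` on the edge `xy`.
  have hfxge : 1 ≤ f x := hφx ▸ hfA x (mem_insert_self _ _)
  have hfyle : f y ≤ 0 := hψy ▸ hfB y (mem_insert_self _ _)
  have hfxy := hadj1 x y hxy
  have hfx : f x = 1 := by linarith
  have hfy : f y = 0 := by linarith
  have hk := kappaLLY_le G hxy f hf (by rw [hfx, hfy]; norm_num)
  set Z := G.neighborFinset x ∩ G.neighborFinset y with hZ
  -- Both neighbourhoods split into the opposite endpoint, the private and the common neighbours.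
  have hsplit : ∀ g : V → ℝ, ∑ z ∈ G.neighborFinset x, g z
      = g y + ∑ z ∈ Nx, g z + ∑ z ∈ Z, g z := by
    intro g
    have e : G.neighborFinset x = insert y (Nx ∪ Z) := by
      ext z
      simp only [hNx, hZ, mem_insert, mem_union, Finset.mem_sdiff, mem_inter,
        SimpleGraph.mem_neighborFinset]
      constructor
      · tauto
      · rintro (rfl | h | h)
        · exact hxy
        · exact h.1
        · exact h.1
    rw [e, sum_insert, sum_union, add_assoc]
    · rw [disjoint_left]; intro z hz; simp [hZ, (memNx z hz).2.2]
    · intro h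
      rcases mem_union.1 h with h | h
      · exact (memNx y h).2.1 rfl
      · simp [hZ] at h
  have hsplit' : ∀ g : V → ℝ, ∑ z ∈ G.neighborFinset y, g z
      = g x + ∑ z ∈ Ny, g z + ∑ z ∈ Z, g z := by
    intro g
    have e : G.neighborFinset y = insert x (Ny ∪ Z) := by
      ext z
      simp only [hNy, hZ, mem_insert, mem_union, Finset.mem_sdiff, mem_inter,
        SimpleGraph.mem_neighborFinset]
      constructor
      · tauto
      · rintro (rfl | h | h)
        · exact hxy.symm
        · exact h.1
        · exact h.2
    rw [e, sum_insert, sum_union, add_assoc]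
    · rw [disjoint_left]; intro z hz; simp [hZ, (memNy z hz).2.2]
    · intro h
      rcases mem_union.1 h with h | h
      · exact (memNy x h).2.1 rfl
      · simp [hZ] at h
  have hD : (G.degree x : ℝ) = 1 + Nx.card + Z.card := by
    have := hsplit (fun _ => 1)
    simpa using this
  have hd' : (G.degree y : ℝ) = 1 + Ny.card + Z.card := by
    have := hsplit' (fun _ => 1)
    simpa using this
  have sum_ind : ∀ S A : Finset V, S ⊆ A → ∑ u ∈ A, ind S u = S.card := by
    intro S A hSA
    simp only [ind]
    rw [← sum_filter, filter_mem_eq_inter, inter_eq_right.2 hSA]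
    simp
  have hX : 2 * (Nx.card : ℝ) - S₁.card - S₂.card ≤ ∑ u ∈ Nx, f u := by
    have h1 : ∑ u ∈ Nx, φ u ≤ ∑ u ∈ Nx, f u :=
      sum_le_sum fun u hu => hfA u (mem_insert_of_mem hu)
    rw [sum_congr rfl hφ, sum_sub_distrib, sum_sub_distrib, sum_ind _ _ hS₁, sum_ind _ _ hS₂,
      sum_const, nsmul_eq_mul] at h1
    linarith
  have hY : ∑ v ∈ Ny, f v ≤ -(Ny.card : ℝ) + T₁.card + T₂.card := by
    have h1 : ∑ v ∈ Ny, f v ≤ ∑ v ∈ Ny, ψ v :=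
      sum_le_sum fun v hv => hfB v (mem_insert_of_mem hv)
    rw [sum_congr rfl hψ, sum_add_distrib, sum_add_distrib, sum_ind _ _ hT₁, sum_ind _ _ hT₂,
      sum_const, nsmul_eq_mul] at h1
    linarith
  have hs1 : ∑ z ∈ Z, f z ≤ Z.card := by
    have : ∑ z ∈ Z, f z ≤ ∑ z ∈ Z, (1 : ℝ) := sum_le_sum fun z hz => by
      have hz' : G.Adj y z := by simpa using (mem_inter.1 hz).2
      linarith [hadj1 z y hz'.symm]
    simpa using this
  rw [hsplit f, hsplit' f, hfx, hfy] at hk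
  have hdpos : (0 : ℝ) < G.degree y := by
    rw [hd', add_assoc]
    exact add_pos_of_pos_of_nonneg one_pos (add_nonneg (Nat.cast_nonneg _) (Nat.cast_nonneg _))
  have hdD : (G.degree y : ℝ) ≤ G.degree x := Nat.cast_le.2 hd
  have hnn : (0 : ℝ) ≤ Z.card + S₁.card + S₂.card :=
    add_nonneg (add_nonneg (Nat.cast_nonneg _) (Nat.cast_nonneg _)) (Nat.cast_nonneg _)
  have q4 := arith_bound hdpos hdD hD hd' hnn hs1 hX hY (hpos.trans_le hk)
  have q5 : 2 * G.degree y < 4 + 3 * Z.card + (S₁.card + T₁.card) + (S₂.card + T₂.card) := by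
    exact_mod_cast q4
  omega
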